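/- Let k ≥ 1, n ≥ 1 and a : ℕ, and suppose the subpermutation π_T[a,a+n] (of length n+1, with 2k ≤ n+1) is of type k. Then the subpermutation π_T[2a,2a+2n] (of length 2n+1) is of type 2k−1. If moreover k ≥ 2, then the subpermutations π_T[2a,2a+2n−1] and π_T[2a+1,2a+2n] (of length 2n) are of type 2k−2, and the subpermutation π_T[2a+1,2a+2n−1] (of length 2n−1) is of type 2k−3. -/

import Mathlib

/-!
The letters of the Thue–Morse word satisfy `TM (2 * n) = TM n` and `TM (2 * n + 1) = 1 - TM n`,
so the word is not ultimately periodic and has no factor `000` or `111`. Hence `Prec` is a strict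
total order, and two ranks in a window differ by one exactly when no position of the window lies
strictly between the two (`P_succ_iff`). Being of type `k` thus becomes a statement about covering
pairs (`typeK_iff`), which is clearly inherited by smaller windows containing the pairs
(`Cov.mono`).

The order of the shifts at doubled positions is governed by three facts:
* `2x ≺ 2y` iff `x ≺ y`;
* `2x+1 ≺ 2y+1` iff `x ≺ y`, provided `x` and `y` carry the same letter;
* an odd position whose letter is `0` precedes every even position, and one whose letter is `1`
  follows every even position.

So a covering pair `x, y` gives a covering pair `2x, 2y`. If `x, y` and `x+1, y+1` are both covering
pairs, then `x` and `y` carry the same letter (`Cov.letter_eq`), and `2x+1, 2y+1` is a covering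
pair as well. All four claims follow, as all four types have the same offset `2(n+1-k)` between
the members of a pair.
-/

/-- The Thue-Morse word: parity of the binary digit sum. -/
def TM (n : ℕ) : ℕ := (Nat.digits 2 n).sum % 2

/-- `Prec a b` : the shift of the Thue-Morse word at `a` is lexicographically
smaller than the shift at `b`. -/
def Prec (a b : ℕ) : Prop :=
  ∃ c : ℕ, (∀ i < c, TM (a + i) = TM (b + i)) ∧ TM (a + c) < TM (b + c)

/-- The subpermutations of `π_T` of length `N` starting at `a` and `b` coincide. -/
def SamePerm (N a b : ℕ) : Prop :=
  ∀ i < N, ∀ j < N, (Prec (a + i) (a + j) ↔ Prec (b + i) (b + j))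

open scoped Classical in
/-- `P a N i` : the 0-indexed rank of position `a+i` within the subpermutation
`π_T[a, a+N-1]`. -/
noncomputable def P (a N i : ℕ) : ℕ :=
  ((Finset.range N).filter (fun j => Prec (a + j) (a + i))).card

/-- The subpermutations `π_T[a,a+N-1]` and `π_T[b,b+N-1]` have the same form. -/
def SameForm (N a b : ℕ) : Prop :=
  ∀ i < N - 1, (Prec (a + i) (a + (i + 1))) ↔ (Prec (b + i) (b + (i + 1)))

/-- The subpermutation `π_T[a,a+N-1]` is of type `k`. -/
def TypeK (k N a : ℕ) : Prop :=
  1 ≤ k ∧ 2 * k ≤ N ∧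
  ∃ ε : ℤ, (ε = 1 ∨ ε = -1) ∧
    ∀ i < k, (P a N i : ℤ) = P a N (N - k + i) + ε

/-- Positions `a` and `b` form a complementary pair of type `k` of length `N`. -/
def CompPair (k N a b : ℕ) : Prop :=
  1 ≤ k ∧ 2 * k ≤ N ∧
  ∃ ε : ℤ, (ε = 1 ∨ ε = -1) ∧
    (∀ i < k,
      (P a N i : ℤ) = P a N (N - k + i) + ε ∧
      (P b N i : ℤ) = P a N (N - k + i) ∧
      (P b N (N - k + i) : ℤ) = P a N i) ∧
    (∀ j, k ≤ j → j < N - k → P b N j = P a N j)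

/-- The permutation complexity of the Thue-Morse word: the number of distinct
subpermutations of `π_T` of length `N`. -/
noncomputable def tau (N : ℕ) : ℕ :=
  Set.ncard (Set.range (fun a : ℕ => fun i j : Fin N => Prec (a + i) (a + j)))

/-! ### Letters of the Thue–Morse word -/

lemma TM_double (n : ℕ) : TM (2 * n) = TM n := by
  rcases Nat.eq_zero_or_pos n with rfl | h
  · rfl
  · unfold TM
    rw [Nat.digits_def' (by norm_num) (by omega)]
    simp

lemma TM_double_add_one (n : ℕ) : TM (2 * n + 1) + TM n = 1 := by
  unfold TM
  rw [Nat.digits_def' (b := 2) (n := 2 * n + 1) (by norm_num) (by omega)]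
  have h1 : (2 * n + 1) % 2 = 1 := by omega
  have h2 : (2 * n + 1) / 2 = n := by omega
  rw [h1, h2, List.sum_cons]
  omega

lemma TM_le_one (n : ℕ) : TM n ≤ 1 := by
  unfold TM; omega

lemma TM_no_cube (m : ℕ) (h1 : TM m = TM (m + 1)) : TM (m + 2) ≠ TM (m + 1) := by
  rcases Nat.even_or_odd' m with ⟨c, rfl | rfl⟩
  · have := TM_double c
    have := TM_double_add_one c
    omega
  · have := TM_double (c + 1)
    have := TM_double_add_one (c + 1)
    rw [show 2 * c + 1 + 1 = 2 * (c + 1) by ring, show 2 * c + 1 + 2 = 2 * (c + 1) + 1 by ring]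
    omega

/-- The Thue–Morse word is not ultimately periodic. An even period can be halved, and an odd period
would force the word to be ultimately constant. -/
lemma TM_not_periodic (d : ℕ) (hd : 0 < d) (x : ℕ) (h : ∀ m, x ≤ m → TM (m + d) = TM m) :
    False := by
  induction d using Nat.strong_induction_on generalizing x with
  | _ d ih =>
    rcases Nat.even_or_odd' d with ⟨e, rfl | rfl⟩
    · refine ih e (by omega) (by omega) x fun m hm => ?_
      have := h (2 * m) (by omega)
      rwa [← mul_add, TM_double, TM_double] at this
    · have key : ∀ m, x ≤ m → TM (m + e + 1) = TM (m + e) := by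
        intro m hm
        have h1 := h (2 * m) (by omega)
        have h2 := h (2 * m + 1) (by omega)
        rw [show 2 * m + (2 * e + 1) = 2 * (m + e) + 1 by ring] at h1
        rw [show 2 * m + 1 + (2 * e + 1) = 2 * (m + e + 1) by ring] at h2
        have := TM_double m
        have := TM_double_add_one m
        have := TM_double (m + e + 1)
        have := TM_double_add_one (m + e)
        omega
      have h1 := key (2 * x + e) (by omega)
      rw [show 2 * x + e + e = 2 * (x + e) by ring] at h1
      have := TM_double (x + e)
      have := TM_double_add_one (x + e)
      omega

/-! ### The order on shifts -/

lemma prec_of_lt {x y : ℕ} (h : TM x < TM y) : Prec x y := ⟨0, by simp, by simpa using h⟩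

lemma prec_of_eq {x y : ℕ} (h : TM x = TM y) (h' : Prec (x + 1) (y + 1)) : Prec x y := by
  obtain ⟨c, hc, hlt⟩ := h'
  refine ⟨c + 1, fun i hi => ?_, by convert hlt using 2 <;> ring⟩
  cases i with
  | zero => simpa using h
  | succ i => convert hc i (by omega) using 2 <;> ring

lemma Prec.cases {x y : ℕ} (h : Prec x y) :
    TM x < TM y ∨ (TM x = TM y ∧ Prec (x + 1) (y + 1)) := by
  obtain ⟨c, hc, hlt⟩ := h
  cases c with
  | zero => left; simpa using hlt
  | succ c =>
    refine Or.inr ⟨by simpa using hc 0 (by omega), c, fun i hi => ?_, ?_⟩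
    · convert hc (i + 1) (by omega) using 2 <;> ring
    · convert hlt using 2 <;> ring

lemma Prec.le {x y : ℕ} (h : Prec x y) : TM x ≤ TM y := by
  rcases h.cases with h | h <;> omega

lemma prec_irrefl (x : ℕ) : ¬ Prec x x := by
  rintro ⟨c, -, h⟩
  exact lt_irrefl _ h

lemma Prec.trans {x y z : ℕ} (h : Prec x y) (h' : Prec y z) : Prec x z := by
  obtain ⟨c, hc, hlt⟩ := h
  obtain ⟨d, hd, hlt'⟩ := h'
  rcases lt_trichotomy c d with hcd | rfl | hcd
  · exact ⟨c, fun i hi => (hc i hi).trans (hd i (hi.trans hcd)), by rw [← hd c hcd]; exact hlt⟩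
  · exact ⟨c, fun i hi => (hc i hi).trans (hd i hi), hlt.trans hlt'⟩
  · exact ⟨d, fun i hi => (hc i (hi.trans hcd)).trans (hd i hi), by rw [hc d hcd]; exact hlt'⟩

lemma Prec.asymm {x y : ℕ} (h : Prec x y) : ¬ Prec y x := fun h' => prec_irrefl _ (h.trans h')

lemma prec_total {x y : ℕ} (hxy : x ≠ y) : Prec x y ∨ Prec y x := by
  have hne : ∃ c, TM (x + c) ≠ TM (y + c) := by
    by_contra! hall
    rcases lt_or_gt_of_ne hxy with h | h
    · refine TM_not_periodic (y - x) (by omega) x fun m hm => ?_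
      convert (hall (m - x)).symm using 2 <;> omega
    · refine TM_not_periodic (x - y) (by omega) y fun m hm => ?_
      convert hall (m - y) using 2 <;> omega
  classical
  have hmin : ∀ i < Nat.find hne, TM (x + i) = TM (y + i) := fun i hi => by
    simpa using Nat.find_min hne hi
  rcases lt_or_gt_of_ne (Nat.find_spec hne) with h | h
  · exact Or.inl ⟨_, hmin, h⟩
  · exact Or.inr ⟨_, fun i hi => (hmin i hi).symm, h⟩

/-! ### The order at doubled positions -/

lemma Prec.double {x y : ℕ} (h : Prec x y) : Prec (2 * x) (2 * y) := by
  obtain ⟨c, hc, hlt⟩ := h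
  refine ⟨2 * c, fun i hi => ?_, by rwa [← mul_add, ← mul_add, TM_double, TM_double]⟩
  rcases Nat.even_or_odd' i with ⟨j, rfl | rfl⟩
  · rw [← mul_add, ← mul_add, TM_double, TM_double]
    exact hc j (by omega)
  · have := hc j (by omega)
    have := TM_double_add_one (x + j)
    have := TM_double_add_one (y + j)
    rw [show 2 * x + (2 * j + 1) = 2 * (x + j) + 1 by ring,
      show 2 * y + (2 * j + 1) = 2 * (y + j) + 1 by ring]
    omega

lemma prec_double_iff {x y : ℕ} : Prec (2 * x) (2 * y) ↔ Prec x y := by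
  refine ⟨fun h => ?_, Prec.double⟩
  have hne : x ≠ y := by rintro rfl; exact prec_irrefl _ h
  exact (prec_total hne).resolve_right fun h' => h.asymm h'.double

lemma prec_odd_iff {x y : ℕ} (he : TM x = TM y) :
    Prec (2 * x + 1) (2 * y + 1) ↔ Prec x y := by
  have he2 : TM (2 * x) = TM (2 * y) := by rwa [TM_double, TM_double]
  rw [← prec_double_iff (x := x)]
  refine ⟨prec_of_eq he2, fun h => ?_⟩
  rcases h.cases with h | h
  · omega
  · exact h.2

/-- The word read from an odd position with letter `0` begins with `00` or `0100`, whereas the word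
read from an even position with letter `0` begins with `0101` or `0110`. -/
lemma odd_prec_even {z : ℕ} (hz : TM (2 * z + 1) = 0) (x : ℕ) : Prec (2 * z + 1) (2 * x) := by
  have a1 := TM_double_add_one z
  have a2 := TM_double (z + 1)
  have a3 := TM_double_add_one (z + 1)
  have a4 := TM_double (z + 2)
  have b1 := TM_double x
  have b2 := TM_double_add_one x
  have b3 := TM_double (x + 1)
  have b4 := TM_double_add_one (x + 1)
  have nc := TM_no_cube z
  have l1 := TM_le_one (z + 1)
  have l2 := TM_le_one (z + 2)
  have l3 := TM_le_one (x + 1)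
  by_cases c0 : TM (2 * x) = 0
  swap
  · exact prec_of_lt (by omega)
  refine prec_of_eq (by omega) ?_
  rw [show 2 * z + 1 + 1 = 2 * (z + 1) by ring]
  by_cases c1 : TM (z + 1) = 0
  · exact prec_of_lt (by omega)
  refine prec_of_eq (by omega) ?_
  rw [show 2 * x + 1 + 1 = 2 * (x + 1) by ring]
  by_cases c2 : TM (x + 1) = 1
  · exact prec_of_lt (by omega)
  refine prec_of_eq (by omega) ?_
  rw [show 2 * (z + 1) + 1 + 1 = 2 * (z + 2) by ring]
  exact prec_of_lt (by omega)

/-- The mirror image of `odd_prec_even` under exchanging the two letters. -/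
lemma even_prec_odd {z : ℕ} (hz : TM (2 * z + 1) = 1) (x : ℕ) : Prec (2 * x) (2 * z + 1) := by
  have a1 := TM_double_add_one z
  have a2 := TM_double (z + 1)
  have a3 := TM_double_add_one (z + 1)
  have a4 := TM_double (z + 2)
  have b1 := TM_double x
  have b2 := TM_double_add_one x
  have b3 := TM_double (x + 1)
  have b4 := TM_double_add_one (x + 1)
  have nc := TM_no_cube z
  have l1 := TM_le_one (z + 1)
  have l2 := TM_le_one (z + 2)
  have l3 := TM_le_one (x + 1)
  by_cases c0 : TM (2 * x) = 0
  · exact prec_of_lt (by omega)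
  refine prec_of_eq (by omega) ?_
  rw [show 2 * z + 1 + 1 = 2 * (z + 1) by ring]
  by_cases c1 : TM (z + 1) = 1
  · exact prec_of_lt (by omega)
  refine prec_of_eq (by omega) ?_
  rw [show 2 * x + 1 + 1 = 2 * (x + 1) by ring]
  by_cases c2 : TM (x + 1) = 0
  · exact prec_of_lt (by omega)
  refine prec_of_eq (by omega) ?_
  rw [show 2 * (z + 1) + 1 + 1 = 2 * (z + 2) by ring]
  exact prec_of_lt (by omega)

/-! ### Covering pairs -/

/-- `Cov a N x y`: `x` precedes `y`, and no position of the window `[a, a+N-1]` lies strictly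
between them in the order `Prec`. The positions `x` and `y` need not belong to the window. -/
def Cov (a N x y : ℕ) : Prop :=
  Prec x y ∧ ∀ z, a ≤ z → z < a + N → Prec x z → ¬ Prec z y

lemma Cov.mono {a N b M x y : ℕ} (h : Cov a N x y) (hab : a ≤ b) (hM : b + M ≤ a + N) :
    Cov b M x y :=
  ⟨h.1, fun z h1 h2 => h.2 z (by omega) (by omega)⟩

lemma P_succ_iff {a N i j : ℕ} (hi : i < N) :
    P a N j = P a N i + 1 ↔ Cov a N (a + i) (a + j) := by
  classical
  have key : ∀ l m, P a N l < P a N m → Prec (a + l) (a + m) := by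
    intro l m hlm
    by_contra hn
    refine absurd hlm (not_lt.mpr (Finset.card_le_card fun t ht => ?_))
    rw [Finset.mem_filter] at ht ⊢
    refine ⟨ht.1, ?_⟩
    by_cases e : a + m = a + l
    · rw [← e]; exact ht.2
    · exact ht.2.trans ((prec_total e).resolve_right hn)
  have mono : ∀ l m, l < N → Prec (a + l) (a + m) → P a N l < P a N m := by
    intro l m hl hlm
    refine Finset.card_lt_card ((Finset.ssubset_iff_of_subset fun t ht => ?_).2 ⟨l, ?_, ?_⟩)
    · rw [Finset.mem_filter] at ht ⊢
      exact ⟨ht.1, ht.2.trans hlm⟩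
    · simp [hl, hlm]
    · simp [prec_irrefl]
  constructor
  · intro h
    refine ⟨key i j (by omega), fun z hz1 hz2 hxz hzy => ?_⟩
    obtain ⟨l, rfl⟩ := Nat.exists_eq_add_of_le hz1
    have := mono i l hi hxz
    have := mono l j (by omega) hzy
    omega
  · rintro ⟨hij, hcov⟩
    unfold P
    rw [← Finset.card_insert_of_notMem (a := i) (by simp [prec_irrefl])]
    congr 1
    ext t
    simp only [Finset.mem_insert, Finset.mem_filter, Finset.mem_range]
    constructor
    · rintro ⟨ht, htj⟩
      by_cases e : t = i
      · exact Or.inl e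
      · refine Or.inr ⟨ht, (prec_total (by omega)).resolve_right fun h => ?_⟩
        exact hcov _ (by omega) (by omega) h htj
    · rintro (rfl | ⟨ht, hti⟩)
      · exact ⟨hi, hij⟩
      · exact ⟨ht, hti.trans hij⟩

lemma typeK_iff {k N a : ℕ} : TypeK k N a ↔ 1 ≤ k ∧ 2 * k ≤ N ∧
    ((∀ i < k, Cov a N (a + (N - k + i)) (a + i)) ∨
      (∀ i < k, Cov a N (a + i) (a + (N - k + i)))) := by
  unfold TypeK
  refine and_congr_right fun h1 => and_congr_right fun h2 => ⟨?_, ?_⟩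
  · rintro ⟨ε, rfl | rfl, h⟩
    · refine Or.inl fun i hi => (P_succ_iff (by omega)).1 ?_
      have := h i hi
      omega
    · refine Or.inr fun i hi => (P_succ_iff (by omega)).1 ?_
      have := h i hi
      omega
  · rintro (h | h)
    · refine ⟨1, Or.inl rfl, fun i hi => ?_⟩
      have := (P_succ_iff (by omega)).2 (h i hi)
      omega
    · refine ⟨-1, Or.inr rfl, fun i hi => ?_⟩
      have := (P_succ_iff (by omega)).2 (h i hi)
      omega

/-! ### Images of covering pairs -/

lemma Cov.even {a n x y : ℕ} (h : Cov a (n + 1) x y) :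
    Cov (2 * a) (2 * n + 1) (2 * x) (2 * y) := by
  refine ⟨h.1.double, fun z hz1 hz2 hxz hzy => ?_⟩
  rcases Nat.even_or_odd' z with ⟨w, rfl | rfl⟩
  · exact h.2 w (by omega) (by omega) (prec_double_iff.1 hxz) (prec_double_iff.1 hzy)
  · rcases Nat.le_one_iff_eq_zero_or_eq_one.1 (TM_le_one (2 * w + 1)) with e | e
    · exact hxz.asymm (odd_prec_even e x)
    · exact hzy.asymm (even_prec_odd e y)

/-- If the letters differed, `x` would be the last window position with letter `0` and `y` the first
one with letter `1`. Then `x + 1` has letter `1` (from `001…` the shift by one is larger) and `y + 1`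
has letter `0`, so that `y + 1` precedes `x + 1`. -/
lemma Cov.letter_eq {a N x y : ℕ} (h : Cov a N x y) (h' : Prec (x + 1) (y + 1))
    (hx : a ≤ x) (hx' : x + 1 < a + N) (hy : a ≤ y) (hy' : y + 1 < a + N) : TM x = TM y := by
  by_contra hne
  have hle := h.1.le
  have hle' := h'.le
  have := TM_le_one y
  have := TM_le_one (x + 1)
  have := TM_le_one (y + 1)
  have := TM_le_one (x + 2)
  have := TM_le_one (y + 2)
  have cx := TM_no_cube x
  have cy := TM_no_cube y
  have hx1 : TM (x + 1) = 1 := by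
    by_contra e
    exact h.2 (x + 1) (by omega) hx'
      (prec_of_eq (by omega) (prec_of_lt (y := x + 1 + 1) (by change _ < TM (x + 2); omega)))
      (prec_of_lt (by omega))
  have hy1 : TM (y + 1) = 0 := by
    by_contra e
    exact h.2 (y + 1) (by omega) hy' (prec_of_lt (by omega))
      (prec_of_eq (by omega) (prec_of_lt (x := y + 1 + 1) (by change TM (y + 2) < _; omega)))
  omega

lemma Cov.odd {a n x y : ℕ} (h : Cov a (n + 1) x y) (he : TM x = TM y) :
    Cov (2 * a) (2 * n + 1) (2 * x + 1) (2 * y + 1) := by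
  refine ⟨(prec_odd_iff he).2 h.1, fun z hz1 hz2 hxz hzy => ?_⟩
  have ex := TM_double_add_one x
  have ey := TM_double_add_one y
  rcases Nat.even_or_odd' z with ⟨w, rfl | rfl⟩
  · rcases Nat.le_one_iff_eq_zero_or_eq_one.1 (TM_le_one (2 * x + 1)) with e | e
    · exact hzy.asymm (odd_prec_even (by omega) w)
    · exact hxz.asymm (even_prec_odd e w)
  · have ew := TM_double_add_one w
    have := hxz.le
    have := hzy.le
    exact h.2 w (by omega) (by omega) ((prec_odd_iff (by omega)).1 hxz)
      ((prec_odd_iff (by omega)).1 hzy)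

/-- A run of `k` consecutive covering pairs, starting at `x, y`, gives a run of `2k-1` consecutive
covering pairs starting at `2x, 2y`. -/
lemma cov_image {a n k x y : ℕ} (hx : a ≤ x) (hx' : x + k ≤ a + n + 1) (hy : a ≤ y)
    (hy' : y + k ≤ a + n + 1) (h : ∀ i < k, Cov a (n + 1) (x + i) (y + i)) :
    ∀ j < 2 * k - 1, Cov (2 * a) (2 * n + 1) (2 * x + j) (2 * y + j) := by
  intro j hj
  rcases Nat.even_or_odd' j with ⟨i, rfl | rfl⟩
  · rw [← mul_add, ← mul_add]
    exact (h i (by omega)).even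
  · rw [← add_assoc, ← add_assoc, ← mul_add, ← mul_add]
    have hi := h i (by omega)
    exact hi.odd (hi.letter_eq (h (i + 1) (by omega)).1 (by omega) (by omega) (by omega)
      (by omega))

/-- The image under the Thue-Morse morphism of a subpermutation of type `k` is of
type `2k-1`; for `k ≥ 2`, the left and right restrictions are of type `2k-2` and
the middle restriction is of type `2k-3`. -/
theorem image_of_typeK (k n a : ℕ) (hk : 1 ≤ k) (hn : 1 ≤ n)
    (h : TypeK k (n + 1) a) :
    TypeK (2 * k - 1) (2 * n + 1) (2 * a) ∧
    (2 ≤ k →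
      TypeK (2 * k - 2) (2 * n) (2 * a) ∧
      TypeK (2 * k - 2) (2 * n) (2 * a + 1) ∧
      TypeK (2 * k - 3) (2 * n - 1) (2 * a + 1)) := by
  obtain ⟨-, h2, h⟩ := typeK_iff.1 h
  -- Every window `[2a+s, 2a+s+M-1]` inside the image is handled at once: the offset of the pairs is
  -- `2(n+1-k)`, and the `m` pairs used are those with indices `s, …, s+m-1`.
  have main : ∀ s m M, 1 ≤ m → 2 * m ≤ M → s + m ≤ 2 * k - 1 → s + M ≤ 2 * n + 1 →
      M - m = 2 * (n + 1 - k) → TypeK m M (2 * a + s) := by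
    intro s m M hm hmM hs hM hoff
    refine typeK_iff.2 ⟨hm, hmM, h.imp (fun h j hj => ?_) (fun h j hj => ?_)⟩
    · have := cov_image (a := a) (n := n) (k := k) (x := a + (n + 1 - k)) (y := a) (by omega)
        (by omega) (by omega) (by omega)
        (fun i hi => by rw [add_assoc]; exact h i hi) (s + j) (by omega)
      convert this.mono (b := 2 * a + s) (M := M) (by omega) (by omega) using 1 <;> omega
    · have := cov_image (a := a) (n := n) (k := k) (x := a) (y := a + (n + 1 - k)) (by omega)
        (by omega) (by omega) (by omega)
        (fun i hi => by rw [add_assoc a (n + 1 - k)]; exact h i hi) (s + j) (by omega)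
      convert this.mono (b := 2 * a + s) (M := M) (by omega) (by omega) using 1 <;> omega
  refine ⟨main 0 _ _ ?_ ?_ ?_ ?_ ?_, fun hk2 => ⟨main 0 _ _ ?_ ?_ ?_ ?_ ?_,
    main 1 _ _ ?_ ?_ ?_ ?_ ?_, main 1 _ _ ?_ ?_ ?_ ?_ ?_⟩⟩ <;> omega
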